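/- Let 𝕜 be a nontrivially normed field whose norm satisfies the ultrametric inequality, and let Z and F be Banach spaces over 𝕜 whose norms also satisfy the ultrametric inequality; equip E := Z × F with the maximum norm. Let P ⊆ Z and U ⊆ F be open subsets and f : P × U → F a map that is strictly differentiable at every point of P × U. Let (p,x) ∈ P × U be such that A := Df(p,x)(0, ·) : F → F is a continuous linear automorphism of F. Then there exist an open neighbourhood Q ⊆ P of p and r > 0 with B := B_r(x) ⊆ U such that, writing f_q := f(q,·): (a)' f_q(B) = f(p,x) + A(B_r(0)) =: V for every q ∈ Q, and φ_q : B → V, φ_q(y) := f(q,y), is a bijection whose inverse φ_q^{-1} : V → B is strictly differentiable at every point; (b)' φ_q(B_s(y)) = φ_q(y) + A(B_s(0)) for all q ∈ Q, y ∈ B and s ∈ (0, r]; and (c)' the map ψ : Q × V → B, ψ(q,v) := φ_q^{-1}(v), is strictly differentiable at every point, and θ : Q × B → Q × V, θ(q,y) := (q, f(q,y)), is a bijection such that both θ and θ^{-1} are strictly differentiable at every point, with θ^{-1}(q,v) = (q, ψ(q,v)). -/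

import Mathlib

/-!
Put `h = A⁻¹ ∘ f`. The partial derivative of `h` in the second variable at `(p, x)` is the
identity, so strict differentiability gives `‖h (q, y) - h (q, z) - (y - z)‖ ≤ ‖y - z‖ / 2` near
`(p, x)`. The ultrametric inequality turns this approximate equality into the exact one
`‖h (q, y) - h (q, z)‖ = ‖y - z‖`, and for a target `w` in the ball `B_s (h (q, y))` the map
`z ↦ z - h (q, z) + w` sends the ball `B_s y` into itself and is a contraction; since open balls
are closed, hence complete, it has a fixed point there. Hence `h (q, ·)` maps `B_s y` bijectively
onto `B_s (h (q, y))` (`image_ball_of_approx_id`), with no loss of radius. As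
`‖h (q, x) - h (p, x)‖ < r` for `q` near `p`, any point of a ball being a centre, all the images
`h (q, B)` coincide.

The same estimate shows that at every point of `Q × B` the second partial derivative of `h`
differs from the identity by an operator of norm at most `1/2`, so it is invertible by the Neumann
series. The derivative of `θ (q, y) = (q, f (q, y))` is then a block triangular isomorphism, and
the inverse function theorem applies at every point to the inverse of `θ`.
-/

open Set Metric

/-- `f` is strictly differentiable at `x` relative to the set `s`, with derivative the
continuous linear map `D`. -/
def SDiffAt (𝕜 : Type*) [NontriviallyNormedField 𝕜] {X Y : Type*}
    [NormedAddCommGroup X] [NormedSpace 𝕜 X] [NormedAddCommGroup Y] [NormedSpace 𝕜 Y]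
    (f : X → Y) (D : X →L[𝕜] Y) (s : Set X) (x : X) : Prop :=
  ∀ ε > (0:ℝ), ∃ δ > (0:ℝ), ∀ y ∈ s, ∀ z ∈ s,
    ‖y - x‖ < δ → ‖z - x‖ < δ → ‖f z - f y - D (z - y)‖ ≤ ε * ‖z - y‖

open Filter Topology

/-- On an open set, strict differentiability relative to the set is the usual one. -/
lemma SDiffAt.hasStrictFDerivAt {𝕜 : Type*} [NontriviallyNormedField 𝕜] {X Y : Type*}
    [NormedAddCommGroup X] [NormedSpace 𝕜 X] [NormedAddCommGroup Y] [NormedSpace 𝕜 Y]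
    {f : X → Y} {D : X →L[𝕜] Y} {s : Set X} {x : X} (h : SDiffAt 𝕜 f D s x)
    (hs : IsOpen s) (hx : x ∈ s) : HasStrictFDerivAt f D x := by
  refine .of_isLittleO (Asymptotics.isLittleO_iff.2 fun ε hε => ?_)
  obtain ⟨δ, hδ, H⟩ := h ε hε
  have hn : s ∩ ball x δ ∈ 𝓝 x := inter_mem (hs.mem_nhds hx) (ball_mem_nhds x hδ)
  filter_upwards [prod_mem_nhds hn hn] with w hw
  exact H w.2 hw.2.1 w.1 hw.1.1 (mem_ball_iff_norm.1 hw.2.2) (mem_ball_iff_norm.1 hw.1.2)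

lemma HasStrictFDerivAt.exists_ball_bound {𝕜 : Type*} [NontriviallyNormedField 𝕜] {X Y : Type*}
    [NormedAddCommGroup X] [NormedSpace 𝕜 X] [NormedAddCommGroup Y] [NormedSpace 𝕜 Y]
    {f : X → Y} {D : X →L[𝕜] Y} {x : X} (h : HasStrictFDerivAt f D x) {ε : ℝ} (hε : 0 < ε) :
    ∃ δ > (0 : ℝ), ∀ y ∈ ball x δ, ∀ z ∈ ball x δ,
      ‖f z - f y - D (z - y)‖ ≤ ε * ‖z - y‖ := by
  have := Asymptotics.isLittleO_iff.1 h.isLittleO hε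
  obtain ⟨δ, hδ, H⟩ := Metric.eventually_nhds_iff_ball.1 this
  refine ⟨δ, hδ, fun y hy z hz => H (z, y) ?_⟩
  rw [← ball_prod_same]
  exact ⟨hz, hy⟩

lemma HasStrictFDerivAt.sDiffAt {𝕜 : Type*} [NontriviallyNormedField 𝕜] {X Y : Type*}
    [NormedAddCommGroup X] [NormedSpace 𝕜 X] [NormedAddCommGroup Y] [NormedSpace 𝕜 Y]
    {f : X → Y} {D : X →L[𝕜] Y} {x : X} (h : HasStrictFDerivAt f D x) (s : Set X) :
    SDiffAt 𝕜 f D s x := by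
  intro ε hε
  obtain ⟨δ, hδ, H⟩ := h.exists_ball_bound hε
  exact ⟨δ, hδ, fun y _ z _ hy hz =>
    H y (mem_ball_iff_norm.2 hy) z (mem_ball_iff_norm.2 hz)⟩

section Ultrametric

variable {F : Type*} [NormedAddCommGroup F] [IsUltrametricDist F]

/-- The ultrametric equality case: a map that moves differences by at most half their norm is
isometric. -/
lemma norm_sub_eq_of_approx_id {h : F → F} {y z : F}
    (H : ‖h z - h y - (z - y)‖ ≤ 1 / 2 * ‖z - y‖) : ‖h z - h y‖ = ‖z - y‖ := by
  rcases eq_or_ne z y with rfl | hne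
  · simp
  have hpos : 0 < ‖z - y‖ := norm_pos_iff.2 (sub_ne_zero.2 hne)
  have hlt : ‖h z - h y - (z - y)‖ < ‖z - y‖ := by linarith
  have := IsUltrametricDist.norm_add_eq_max_of_norm_ne_norm hlt.ne
  rwa [sub_add_cancel, max_eq_right hlt.le] at this

/-- A map of an ultrametric Banach space close to the identity maps balls onto balls of the same
radius. -/
lemma image_ball_of_approx_id [CompleteSpace F] {h : F → F} {x : F} {r : ℝ}
    (H : ∀ y ∈ ball x r, ∀ z ∈ ball x r, ‖h z - h y - (z - y)‖ ≤ 1 / 2 * ‖z - y‖)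
    {y : F} (hy : y ∈ ball x r) {s : ℝ} (hs : 0 < s) (hsr : s ≤ r) :
    h '' ball y s = ball (h y) s := by
  have hsub : ball y s ⊆ ball x r := by
    rw [IsUltrametricDist.ball_eq_of_mem hy]
    exact ball_subset_ball hsr
  apply Subset.antisymm
  · rintro _ ⟨z, hz, rfl⟩
    rw [mem_ball_iff_norm, norm_sub_eq_of_approx_id (H y hy z (hsub hz))]
    exact mem_ball_iff_norm.1 hz
  · intro w hw
    have hmaps : MapsTo (fun z => z - h z + w) (ball y s) (ball y s) := by
      intro z hz
      have hz' := mem_ball_iff_norm.1 hz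
      have e : z - h z + w - y = -(h z - h y - (z - y)) + (w - h y) := by abel
      rw [mem_ball_iff_norm, e]
      refine (IsUltrametricDist.norm_add_le_max _ _).trans_lt
        (max_lt ?_ (mem_ball_iff_norm.1 hw))
      rw [norm_neg]
      refine (H y hy z (hsub hz)).trans_lt ?_
      have := norm_nonneg (z - y)
      linarith
    have hcontr : ContractingWith (1 / 2) (hmaps.restrict _ _ _) := by
      refine ⟨by rw [← NNReal.coe_lt_coe]; norm_num, LipschitzWith.of_dist_le_mul ?_⟩
      rintro ⟨a, ha⟩ ⟨b, hb⟩
      change dist (a - h a + w) (b - h b + w) ≤ _ * dist a b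
      have e : a - h a + w - (b - h b + w) = -(h a - h b - (a - b)) := by abel
      rw [dist_eq_norm, dist_eq_norm, e, norm_neg]
      simpa using H b (hsub hb) a (hsub ha)
    obtain ⟨z, hz, hfix, -⟩ := hcontr.exists_fixedPoint'
      (IsUltrametricDist.isClosed_ball y s).isComplete hmaps (mem_ball_self hs) (edist_ne_top _ _)
    refine ⟨z, hz, ?_⟩
    have hfix' : z - h z + w = z := hfix
    have : w - h z = 0 := by
      have e : w - h z = z - h z + w - z := by abel
      rw [e, hfix', sub_self]
    exact (sub_eq_zero.1 this).symm

end Ultrametric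

lemma exists_equiv_of_norm_sub_one_lt {𝕜 : Type*} [NontriviallyNormedField 𝕜]
    {F : Type*} [NormedAddCommGroup F] [NormedSpace 𝕜 F] [CompleteSpace F] {L : F →L[𝕜] F}
    (hL : ‖L - 1‖ < 1) : ∃ e : F ≃L[𝕜] F, (e : F →L[𝕜] F) = L := by
  rw [norm_sub_rev] at hL
  refine ⟨ContinuousLinearEquiv.unitsEquiv 𝕜 F (Units.oneSub (1 - L) hL), ?_⟩
  ext v
  simp

/-- The derivative of `(q, y) ↦ (q, f (q, y))` is block triangular, hence an isomorphism as soon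
as the partial derivative of `f` in the second variable is one. -/
lemma hasStrictFDerivAt_theta {𝕜 : Type*} [NontriviallyNormedField 𝕜]
    {Z : Type*} [NormedAddCommGroup Z] [NormedSpace 𝕜 Z]
    {F : Type*} [NormedAddCommGroup F] [NormedSpace 𝕜 F]
    {f : Z × F → F} {D : Z × F →L[𝕜] F} {w : Z × F} (hf : HasStrictFDerivAt f D w)
    (e : F ≃L[𝕜] F) (he : ∀ v, e v = D (0, v)) :
    ∃ T : (Z × F) ≃L[𝕜] (Z × F),
      HasStrictFDerivAt (fun qy : Z × F => (qy.1, f qy)) (T : Z × F →L[𝕜] Z × F) w := by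
  refine ⟨(ContinuousLinearEquiv.refl 𝕜 Z).skewProd e (D.comp (.inl 𝕜 Z F)), ?_⟩
  convert! (hasStrictFDerivAt_fst (𝕜 := 𝕜) (p := w)).prodMk hf using 1
  refine ContinuousLinearMap.ext fun v => Prod.ext rfl ?_
  change e v.2 + D (v.1, 0) = D v
  rw [he, ← map_add]
  simp

/-- Theorem 7.4(a)'–(c)', ultrametric refinement of the Implicit Function Theorem for
strictly differentiable maps: over an ultrametric field, for ultrametric Banach spaces
`Z`, `F`, with `E = Z × F` carrying the maximum norm, there are `Q ∋ p` open and `r > 0`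
with `B = B_r(x) ⊆ U` such that every `f_q(B)` equals `V := f(p,x) + A(B_r(0))`, each
`φ_q = f_q|_B : B → V` is a bijection with strictly differentiable inverse,
`φ_q(B_s(y)) = φ_q(y) + A(B_s(0))` for `0 < s ≤ r`, and `ψ(q,v) = φ_q⁻¹(v)` on `Q × V`
as well as `θ(q,y) = (q, f(q,y))` and its inverse are strictly differentiable at every
point. -/
theorem stmt15
    {𝕜 : Type*} [NontriviallyNormedField 𝕜]
    {Z : Type*} [NormedAddCommGroup Z] [NormedSpace 𝕜 Z] [CompleteSpace Z]
    {F : Type*} [NormedAddCommGroup F] [NormedSpace 𝕜 F] [CompleteSpace F]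
    (hk_ultra : ∀ s t : 𝕜, ‖s + t‖ ≤ max ‖s‖ ‖t‖)
    (hZ_ultra : ∀ u v : Z, ‖u + v‖ ≤ max ‖u‖ ‖v‖)
    (hF_ultra : ∀ u v : F, ‖u + v‖ ≤ max ‖u‖ ‖v‖)
    (P : Set Z) (hP : IsOpen P) (U : Set F) (hU : IsOpen U)
    (f : Z × F → F) (Df : Z × F → (Z × F →L[𝕜] F))
    (hf : ∀ w ∈ P ×ˢ U, SDiffAt 𝕜 f (Df w) (P ×ˢ U) w)
    (p : Z) (x : F) (hp : p ∈ P) (hx : x ∈ U)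
    (A : F ≃L[𝕜] F) (hA : ∀ y : F, A y = Df (p, x) (0, y)) :
    ∃ (Q : Set Z) (r : ℝ), IsOpen Q ∧ p ∈ Q ∧ Q ⊆ P ∧ 0 < r ∧ ball x r ⊆ U ∧
      ∃ V : Set F,
        V = (fun v => f (p, x) + A v) '' ball 0 r ∧
        (∀ q ∈ Q,
          (fun y => f (q, y)) '' ball x r = V ∧
          InjOn (fun y => f (q, y)) (ball x r) ∧
          ∃ g : F → F,
            (∀ y ∈ ball x r, g (f (q, y)) = y) ∧
            (∀ v ∈ V, g v ∈ ball x r ∧ f (q, g v) = v) ∧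
            ∀ v ∈ V, ∃ D : F →L[𝕜] F, SDiffAt 𝕜 g D V v) ∧
        (∀ q ∈ Q, ∀ y ∈ ball x r, ∀ s : ℝ, 0 < s → s ≤ r →
          (fun y' => f (q, y')) '' ball y s = (fun v => f (q, y) + A v) '' ball 0 s) ∧
        ∃ ψ : Z × F → F,
          (∀ q ∈ Q, ∀ y ∈ ball x r, ψ (q, f (q, y)) = y) ∧
          (∀ qv ∈ Q ×ˢ V, ψ qv ∈ ball x r) ∧
          (∀ qv ∈ Q ×ˢ V, ∃ D : Z × F →L[𝕜] F, SDiffAt 𝕜 ψ D (Q ×ˢ V) qv) ∧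
          BijOn (fun qy : Z × F => (qy.1, f qy)) (Q ×ˢ ball x r) (Q ×ˢ V) ∧
          (∀ qy ∈ Q ×ˢ ball x r, ∃ D : Z × F →L[𝕜] Z × F,
            SDiffAt 𝕜 (fun qy' : Z × F => (qy'.1, f qy')) D (Q ×ˢ ball x r) qy) ∧
          (∀ qv ∈ Q ×ˢ V, ∃ D : Z × F →L[𝕜] Z × F,
            SDiffAt 𝕜 (fun qv' : Z × F => (qv'.1, ψ qv')) D (Q ×ˢ V) qv) ∧
          (∀ qv ∈ Q ×ˢ V, (qv.1, f (qv.1, ψ qv)) = qv) := by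
  have hUF : IsUltrametricDist F :=
    IsUltrametricDist.isUltrametricDist_of_forall_norm_add_le_max_norm hF_ultra
  have hPU : IsOpen (P ×ˢ U) := hP.prod hU
  have hfs : ∀ w ∈ P ×ˢ U, HasStrictFDerivAt f (Df w) w := fun w hw =>
    (hf w hw).hasStrictFDerivAt hPU hw
  -- `h = A⁻¹ ∘ f`, whose second partial derivative at `(p, x)` is the identity
  set h : Z × F → F := fun w => A.symm (f w) with hh
  have hhs : ∀ w ∈ P ×ˢ U,
      HasStrictFDerivAt h ((A.symm : F →L[𝕜] F).comp (Df w)) w := fun w hw =>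
    (A.symm : F →L[𝕜] F).hasStrictFDerivAt.comp w (hfs w hw)
  have hfh : ∀ w, f w = A (h w) := fun w => (A.apply_symm_apply _).symm
  have hpx : (p, x) ∈ P ×ˢ U := ⟨hp, hx⟩
  obtain ⟨δ, hδ, Hδ⟩ := (hhs _ hpx).exists_ball_bound (ε := 1 / 2) (by norm_num)
  obtain ⟨ρU, hρU, HU⟩ := Metric.isOpen_iff.1 hU x hx
  obtain ⟨ρP, hρP, HP⟩ := Metric.isOpen_iff.1 hP p hp
  set r := min δ ρU
  have hr : 0 < r := lt_min hδ hρU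
  have hBU : ball x r ⊆ U := (ball_subset_ball (min_le_right _ _)).trans HU
  have hcont : ContinuousAt (fun q => h (q, x)) p :=
    ContinuousAt.comp (f := fun q : Z => (q, x)) (hhs _ hpx).continuousAt (by fun_prop)
  obtain ⟨η, hη, Hη⟩ := Metric.continuousAt_iff.1 hcont r hr
  set ρ := min δ (min ρP η)
  have hρ : 0 < ρ := lt_min hδ (lt_min hρP hη)
  have hQP : ball p ρ ⊆ P :=
    (ball_subset_ball ((min_le_right _ _).trans (min_le_left _ _))).trans HP
  -- the partial maps `h (q, ·)` are uniformly close to the identity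
  have Hh : ∀ q ∈ ball p ρ, ∀ y ∈ ball x r, ∀ z ∈ ball x r,
      ‖h (q, z) - h (q, y) - (z - y)‖ ≤ 1 / 2 * ‖z - y‖ := by
    intro q hq y hy z hz
    have hqδ : q ∈ ball p δ := ball_subset_ball (min_le_left _ _) hq
    have hyδ : y ∈ ball x δ := ball_subset_ball (min_le_left _ _) hy
    have hzδ : z ∈ ball x δ := ball_subset_ball (min_le_left _ _) hz
    have := Hδ (q, y) (by rw [← ball_prod_same]; exact ⟨hqδ, hyδ⟩)
      (q, z) (by rw [← ball_prod_same]; exact ⟨hqδ, hzδ⟩)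
    have e : (q, z) - (q, y) = ((0 : Z), z - y) := by simp
    rw [e, ContinuousLinearMap.comp_apply, ← hA] at this
    simpa [Prod.norm_def] using this
  have hball : ∀ q ∈ ball p ρ, ∀ y ∈ ball x r, ∀ s : ℝ, 0 < s → s ≤ r →
      (fun y' => h (q, y')) '' ball y s = ball (h (q, y)) s := fun q hq y hy s hs hsr =>
    image_ball_of_approx_id (h := fun y' => h (q, y')) (Hh q hq) hy hs hsr
  have hAball : ∀ (w : Z × F) (s : ℝ),
      (fun v => f w + A v) '' ball 0 s = A '' ball (h w) s := by
    intro w s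
    have e : (fun v => f w + A v) = A ∘ (fun v => h w + v) := by
      funext v
      simp [hfh w]
    rw [e, image_comp]
    simp
  have hfball : ∀ q ∈ ball p ρ, ∀ y ∈ ball x r, ∀ s : ℝ, 0 < s → s ≤ r →
      (fun y' => f (q, y')) '' ball y s = (fun v => f (q, y) + A v) '' ball 0 s := by
    intro q hq y hy s hs hsr
    have e : (fun y' => f (q, y')) = A ∘ (fun y' => h (q, y')) := by
      funext v
      exact hfh _
    rw [hAball, ← hball q hq y hy s hs hsr, e, image_comp]
  have hxB : x ∈ ball x r := mem_ball_self hr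
  set V : Set F := (fun v => f (p, x) + A v) '' ball 0 r with hV
  have hfV : ∀ q ∈ ball p ρ, (fun y => f (q, y)) '' ball x r = V := by
    intro q hq
    rw [hfball q hq x hxB r hr le_rfl, hV, hAball, hAball]
    congr 1
    have hqη : dist q p < η :=
      lt_of_lt_of_le hq ((min_le_right _ _).trans (min_le_right _ _))
    exact (IsUltrametricDist.ball_eq_of_mem (mem_ball.2 (Hη hqη))).symm
  have hinj : ∀ q ∈ ball p ρ, InjOn (fun y => f (q, y)) (ball x r) := by
    intro q hq y hy z hz hyz
    have hyz' : h (q, y) = h (q, z) := congrArg A.symm hyz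
    have := norm_sub_eq_of_approx_id (h := fun y' => h (q, y')) (Hh q hq z hz y hy)
    rw [hyz', sub_self, norm_zero] at this
    exact sub_eq_zero.1 (norm_eq_zero.1 this.symm)
  set ψ : Z × F → F := fun qv =>
    Function.invFunOn (fun y => f (qv.1, y)) (ball x r) qv.2 with hψ
  have hψl : ∀ q ∈ ball p ρ, ∀ y ∈ ball x r, ψ (q, f (q, y)) = y := fun q hq y hy =>
    (hinj q hq).leftInvOn_invFunOn hy
  have hψr : ∀ q ∈ ball p ρ, ∀ v ∈ V, ψ (q, v) ∈ ball x r ∧ f (q, ψ (q, v)) = v := by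
    intro q hq v hv
    rw [← hfV q hq] at hv
    exact ⟨Function.invFunOn_mem hv, Function.invFunOn_eq hv⟩
  -- the derivative of `θ` is an isomorphism at every point of `Q × B`
  have hθ : ∀ w ∈ ball p ρ ×ˢ ball x r, ∃ T : (Z × F) ≃L[𝕜] (Z × F),
      HasStrictFDerivAt (fun qy : Z × F => (qy.1, f qy)) (T : Z × F →L[𝕜] Z × F) w := by
    rintro ⟨q, y⟩ ⟨hq, hy⟩
    have hw : (q, y) ∈ P ×ˢ U := ⟨hQP hq, hBU hy⟩
    set L : F →L[𝕜] F := ((A.symm : F →L[𝕜] F).comp (Df (q, y))).comp (.inr 𝕜 Z F)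
    have hd : HasFDerivAt (fun y' => h (q, y') - y') (L - 1) y :=
      ((hhs _ hw).hasFDerivAt.comp y (hasFDerivAt_prodMk_right q y)).sub (hasFDerivAt_id y)
    have hL : ‖L - 1‖ ≤ 1 / 2 := by
      refine hd.le_of_lip' (by norm_num) ?_
      filter_upwards [isOpen_ball.mem_nhds hy] with z hz
      rw [sub_sub_sub_comm]
      exact Hh q hq y hy z hz
    obtain ⟨e, he⟩ := exists_equiv_of_norm_sub_one_lt (hL.trans_lt (by norm_num))
    refine hasStrictFDerivAt_theta (hfs _ hw) (e.trans A) fun v => ?_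
    have : e v = A.symm (Df (q, y) (0, v)) := congrArg (fun M : F →L[𝕜] F => M v) he
    simp [this]
  have hθinv : ∀ qv ∈ ball p ρ ×ˢ V, ∃ D : Z × F →L[𝕜] Z × F,
      HasStrictFDerivAt (fun qv' : Z × F => (qv'.1, ψ qv')) D qv := by
    rintro ⟨q, v⟩ ⟨hq, hv⟩
    obtain ⟨hmem, heq⟩ := hψr q hq v hv
    obtain ⟨T, hT⟩ := hθ (q, ψ (q, v)) ⟨hq, hmem⟩
    have := hT.to_local_left_inverse (g := fun qv' : Z × F => (qv'.1, ψ qv')) (by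
      filter_upwards [(isOpen_ball.prod isOpen_ball).mem_nhds (mk_mem_prod hq hmem)] with w hw
      exact Prod.ext rfl (hψl w.1 hw.1 w.2 hw.2))
    rw [heq] at this
    exact ⟨_, this⟩
  have hψd : ∀ qv ∈ ball p ρ ×ˢ V, ∃ D : Z × F →L[𝕜] F, HasStrictFDerivAt ψ D qv := by
    intro qv hqv
    obtain ⟨D, hD⟩ := hθinv qv hqv
    exact ⟨_, hD.snd⟩
  refine ⟨ball p ρ, r, isOpen_ball, mem_ball_self hρ, hQP, hr, hBU, V, rfl, ?_, hfball,
    ψ, hψl, fun qv hqv => (hψr qv.1 hqv.1 qv.2 hqv.2).1, ?_, ⟨?_, ?_, ?_⟩, ?_, ?_, ?_⟩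
  · intro q hq
    refine ⟨hfV q hq, hinj q hq, fun v => ψ (q, v), hψl q hq, hψr q hq, fun v hv => ?_⟩
    obtain ⟨D, hD⟩ := hψd (q, v) ⟨hq, hv⟩
    exact ⟨_, HasStrictFDerivAt.sDiffAt
      (hD.comp v ((hasStrictFDerivAt_const q v).prodMk (hasStrictFDerivAt_id v))) V⟩
  · intro qv hqv
    obtain ⟨D, hD⟩ := hψd qv hqv
    exact ⟨D, hD.sDiffAt _⟩
  · rintro ⟨q, y⟩ ⟨hq, hy⟩
    exact ⟨hq, hfV q hq ▸ mem_image_of_mem _ hy⟩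
  · rintro ⟨q, y⟩ ⟨hq, hy⟩ ⟨q', z⟩ ⟨_, hz⟩ heq
    obtain ⟨rfl, h2⟩ := Prod.ext_iff.1 heq
    exact Prod.ext rfl (hinj q hq hy hz h2)
  · rintro ⟨q, v⟩ ⟨hq, hv⟩
    obtain ⟨hmem, heq⟩ := hψr q hq v hv
    exact ⟨(q, ψ (q, v)), ⟨hq, hmem⟩, Prod.ext rfl heq⟩
  · intro w hw
    obtain ⟨T, hT⟩ := hθ w hw
    exact ⟨_, hT.sDiffAt _⟩
  · intro qv hqv
    obtain ⟨D, hD⟩ := hθinv qv hqv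
    exact ⟨D, hD.sDiffAt _⟩
  · rintro ⟨q, v⟩ ⟨hq, hv⟩
    exact Prod.ext rfl (hψr q hq v hv).2
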